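/- arXiv:1210.1272 — 6 statements merged into one kernel-verified Lean document; each statement's English description precedes it below -/
import Mathlib

section
/- (Proposition 1, quantum case.) In the quantum detection-loophole scenario, suppose there exists c : ℬ → ℝ with c(b) > 0 such that Σ_i p_i Tr(ρ_A Σ_{B∈𝒪} M^i_{B,b}) = c(b) for every A ∈ M and b ∈ ℬ (the click probability is independent of the message state). Define, for each a, b for which the denominator Σ_{i,A} p_i P(A|a) Tr(ρ_A Σ_{B'} M^i_{B',b}) is strictly positive, P_DL(B|a,b) := (Σ_{i,A} p_i P(A|a) Tr(ρ_A M^i_{B,b})) / (Σ_{i,A} p_i P(A|a) Tr(ρ_A Σ_{B'} M^i_{B',b})). Then there exist d × d complex density matrices σ_a (for a ∈ 𝒜) and positive semidefinite d × d complex matrices N_{B,b} (for B ∈ 𝒪, b ∈ ℬ) with Tr(σ_a Σ_{B∈𝒪} N_{B,b}) = 1 for every a, b, such that P_DL(B|a,b) = Tr(σ_a N_{B,b}) for all B, a, b; one may take σ_a = Σ_A P(A|a) ρ_A and N_{B,b} = (Σ_i p_i M^i_{B,b}) / c(b). -/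
open Matrix
open scoped ComplexOrder

/-- Proposition 1, quantum case: in the quantum detection-loophole
scenario (states `ρ A`, sub-normalized POVMs `Mv i b`), if the click probability
`∑ i, p i * Tr(ρ A * ∑ B, Mv i b B) = c b` is independent of the message state
(and positive), then the detection-loophole statistics are realized by a quantum
`d`-dimensional model: states `σ a = ∑ A, P(A|a) • ρ A` and positive semidefinite
effects `N B b = (1 / c b) • ∑ i, p i • Mv i b B` with `Tr(σ a * ∑ B, N B b) = 1`
and `P_DL(B|a,b) = Tr(σ a * N B b)`. -/
theorem prop1_quantum
    {𝒜 ℬ M 𝒪 I : Type*}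
    [Fintype 𝒜] [Fintype ℬ] [Fintype M] [Fintype 𝒪] [Fintype I]
    [Nonempty 𝒜] [Nonempty ℬ] [Nonempty M] [Nonempty 𝒪] [Nonempty I]
    (d : ℕ) (hd : 1 ≤ d)
    -- Bob's strategy distribution
    (p : I → ℝ) (hp : ∀ i, 0 ≤ p i) (hp1 : ∑ i, p i = 1)
    -- Alice's message distributions
    (P : 𝒜 → M → ℝ) (hP : ∀ a A, 0 ≤ P a A) (hP1 : ∀ a, ∑ A, P a A = 1)
    -- the d × d density matrices encoding the messages
    (ρ : M → Matrix (Fin d) (Fin d) ℂ)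
    (hρ : ∀ A, (ρ A).PosSemidef) (hρ1 : ∀ A, (ρ A).trace = 1)
    -- Bob's sub-normalized POVMs: each element PSD, remainder (no-click) PSD
    (Mv : I → ℬ → 𝒪 → Matrix (Fin d) (Fin d) ℂ)
    (hMv : ∀ i b B, (Mv i b B).PosSemidef)
    (hMvsub : ∀ i b, (1 - ∑ B, Mv i b B).PosSemidef)
    -- hypothesis: the click probability is independent of the message state
    (c : ℬ → ℝ) (hc : ∀ b, 0 < c b)
    (hindep : ∀ A b, ∑ i, (p i : ℂ) * (ρ A * ∑ B, Mv i b B).trace = (c b : ℂ))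
    -- the detection-loophole statistics (defined whenever the denominator is
    -- strictly positive)
    (PDL : 𝒪 → 𝒜 → ℬ → ℂ)
    (hPDL : ∀ B a b,
      (∀ r : ℝ, (∑ i, ∑ A, (p i : ℂ) * (P a A : ℂ) *
          (ρ A * ∑ B', Mv i b B').trace) = (r : ℂ) → 0 < r) →
      PDL B a b =
        (∑ i, ∑ A, (p i : ℂ) * (P a A : ℂ) * (ρ A * Mv i b B).trace) /
        (∑ i, ∑ A, (p i : ℂ) * (P a A : ℂ) * (ρ A * ∑ B', Mv i b B').trace)) :
    ∃ (σ : 𝒜 → Matrix (Fin d) (Fin d) ℂ)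
      (N : 𝒪 → ℬ → Matrix (Fin d) (Fin d) ℂ),
      -- one may take these explicit choices
      (∀ a, σ a = ∑ A, (P a A : ℂ) • ρ A) ∧
      (∀ B b, N B b = ((c b : ℂ))⁻¹ • ∑ i, (p i : ℂ) • Mv i b B) ∧
      -- σ a is a density matrix
      (∀ a, (σ a).PosSemidef ∧ (σ a).trace = 1) ∧
      -- the effects are positive semidefinite and normalized on the states
      (∀ B b, (N B b).PosSemidef) ∧
      (∀ a b, (σ a * ∑ B, N B b).trace = 1) ∧
      -- and they reproduce the detection-loophole statistics
      (∀ B a b, PDL B a b = (σ a * N B b).trace) := by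
  have hden : ∀ a b, (∑ i, ∑ A, (p i : ℂ) * (P a A : ℂ) *
      (ρ A * ∑ B', Mv i b B').trace) = (c b : ℂ) := by
    intro a b
    rw [Finset.sum_comm]
    have h1 : ∀ A, ∑ i, (p i : ℂ) * (P a A : ℂ) * (ρ A * ∑ B', Mv i b B').trace
        = (P a A : ℂ) * (c b : ℂ) := by
      intro A
      rw [← hindep A b, Finset.mul_sum]
      exact Finset.sum_congr rfl fun i _ => by ring
    rw [Finset.sum_congr rfl fun A _ => h1 A, ← Finset.sum_mul, ← Complex.ofReal_sum, hP1 a]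
    simp
  have hc0 : ∀ b, (c b : ℂ) ≠ 0 := fun b => by exact_mod_cast (hc b).ne'
  have hkey : ∀ a b (X : I → Matrix (Fin d) (Fin d) ℂ),
      ((∑ A, (P a A : ℂ) • ρ A) * ((c b : ℂ)⁻¹ • ∑ i, (p i : ℂ) • X i)).trace
        = (∑ i, ∑ A, (p i : ℂ) * (P a A : ℂ) * (ρ A * X i).trace) / (c b : ℂ) := by
    intro a b X
    rw [Matrix.mul_smul, Matrix.trace_smul, Finset.mul_sum, Matrix.trace_sum, smul_eq_mul,
      div_eq_inv_mul]
    congr 1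
    refine Finset.sum_congr rfl fun i _ => ?_
    rw [Finset.sum_mul, Matrix.trace_sum]
    refine Finset.sum_congr rfl fun A _ => ?_
    rw [Matrix.mul_smul, Matrix.smul_mul, Matrix.trace_smul, Matrix.trace_smul,
      smul_eq_mul, smul_eq_mul]
    ring
  refine ⟨fun a => ∑ A, (P a A : ℂ) • ρ A,
    fun B b => ((c b : ℂ))⁻¹ • ∑ i, (p i : ℂ) • Mv i b B,
    fun _ => rfl, fun _ _ => rfl, fun a => ⟨?_, ?_⟩, fun B b => ?_, fun a b => ?_,
    fun B a b => ?_⟩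
  · exact Matrix.posSemidef_sum _ fun A _ =>
      (hρ A).smul (Complex.zero_le_real.mpr (hP a A))
  · simp only [Matrix.trace_sum, Matrix.trace_smul, hρ1, smul_eq_mul, mul_one]
    rw [← Complex.ofReal_sum, hP1 a, Complex.ofReal_one]
  · refine Matrix.PosSemidef.smul (Matrix.posSemidef_sum _ fun i _ =>
      (hMv i b B).smul (Complex.zero_le_real.mpr (hp i))) ?_
    rw [← Complex.ofReal_inv]
    exact Complex.zero_le_real.mpr (inv_nonneg.mpr (hc b).le)
  · have h2 : ∑ B, ((c b : ℂ))⁻¹ • ∑ i, (p i : ℂ) • Mv i b B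
        = ((c b : ℂ))⁻¹ • ∑ i, (p i : ℂ) • ∑ B, Mv i b B := by
      rw [← Finset.smul_sum, Finset.sum_comm]
      simp only [Finset.smul_sum]
    beta_reduce
    rw [h2, hkey, hden, div_self (hc0 b)]
  · beta_reduce
    rw [hkey, hPDL B a b, hden]
    intro r hr
    rw [hden] at hr
    have : c b = r := by exact_mod_cast hr
    exact this ▸ hc b
end

section
/- (Classical n → 1 random access code bound, used in Corollary 4.) Let n ≥ 2. For every classical strategy with a binary message set M = {0,1}, i.e. probability distributions S(·|a) on {0,1} for each string a ∈ {0,1}ⁿ and probability distributions R(·|A,b) on {0,1} for each A ∈ {0,1}, b ∈ Fin n, there exist a ∈ {0,1}ⁿ and b ∈ Fin n such that Σ_{A∈{0,1}} R(a_b|A,b) S(A|a) ≤ 1/2. In other words, the worst-case success probability of any classical n → 1 random access code is at most 1/2. -/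
/-- A line (through `(p, r)` and `(q, s)`) cannot meet all four open quadrants. -/
lemma line_misses_quadrant (p q r s : ℝ)
    (h : ∀ e f : ℝ, (e = 1 ∨ e = -1) → (f = 1 ∨ f = -1) →
      ∃ t : ℝ, 0 < e * (p * t + q * (1 - t)) ∧ 0 < f * (r * t + s * (1 - t))) : False := by
  -- the line is `c x + d y = k`
  have key : ∀ t : ℝ, (s - r) * (p * t + q * (1 - t)) + (p - q) * (r * t + s * (1 - t))
      = p * s - q * r := by intro t; ring
  obtain ⟨t1, h1, h1'⟩ := h 1 1 (by simp) (by simp)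
  obtain ⟨t2, h2, h2'⟩ := h 1 (-1) (by simp) (by simp)
  obtain ⟨t3, h3, h3'⟩ := h (-1) 1 (by simp) (by simp)
  obtain ⟨t4, h4, h4'⟩ := h (-1) (-1) (by simp) (by simp)
  have k1 := key t1
  have k2 := key t2
  have k3 := key t3
  have k4 := key t4
  have pq : p ≠ q := by
    rintro rfl
    have e1 : p * t1 + p * (1 - t1) = p := by ring
    have e4 : p * t4 + p * (1 - t4) = p := by ring
    rw [e1] at h1
    rw [e4] at h4
    linarith
  have hd : p - q ≠ 0 := sub_ne_zero.mpr pq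
  clear key h
  generalize p * t1 + q * (1 - t1) = x1 at *
  generalize p * t2 + q * (1 - t2) = x2 at *
  generalize p * t3 + q * (1 - t3) = x3 at *
  generalize p * t4 + q * (1 - t4) = x4 at *
  generalize r * t1 + s * (1 - t1) = y1 at *
  generalize r * t2 + s * (1 - t2) = y2 at *
  generalize r * t3 + s * (1 - t3) = y3 at *
  generalize r * t4 + s * (1 - t4) = y4 at *
  generalize p * s - q * r = k at *
  generalize p - q = d at *
  generalize s - r = c at *
  simp only [one_mul, neg_mul, neg_pos] at *
  rcases lt_or_gt_of_ne hd with hd | hd <;> rcases le_total 0 c with hc | hc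
  · have := mul_pos_of_neg_of_neg hd h2'
    have := mul_neg_of_neg_of_pos hd h3'
    have := mul_nonneg hc h2.le
    have := mul_nonpos_of_nonneg_of_nonpos hc h3.le
    linarith
  · have := mul_pos_of_neg_of_neg hd h4'
    have := mul_neg_of_neg_of_pos hd h1'
    have := mul_nonneg_of_nonpos_of_nonpos hc h4.le
    have := mul_nonpos_of_nonpos_of_nonneg hc h1.le
    linarith
  · have := mul_pos hd h1'
    have := mul_neg_of_pos_of_neg hd h4'
    have := mul_nonneg hc h1.le
    have := mul_nonpos_of_nonneg_of_nonpos hc h4.le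
    linarith
  · have := mul_pos hd h3'
    have := mul_neg_of_pos_of_neg hd h2'
    have := mul_nonneg_of_nonpos_of_nonpos hc h3.le
    have := mul_nonpos_of_nonpos_of_nonneg hc h2.le
    linarith

/-- classical n → 1 random access code bound: for `n ≥ 2`, every
classical strategy with a binary message set — encodings `S(·|a)` on `Fin 2`
for bit strings `a : Fin n → Fin 2` and decodings `R(·|A,b)` on `Fin 2` — has
worst-case success probability at most `1/2`: there are `a, b` with
`∑ A, R(a b|A,b) * S(A|a) ≤ 1/2`. -/
theorem classical_rac_bound
    (n : ℕ) (hn : 2 ≤ n)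
    (S : (Fin n → Fin 2) → Fin 2 → ℝ)
    (hS : ∀ a A, 0 ≤ S a A) (hS1 : ∀ a, ∑ A, S a A = 1)
    (R : Fin 2 → Fin n → Fin 2 → ℝ)
    (hR : ∀ A b B, 0 ≤ R A b B) (hR1 : ∀ A b, ∑ B, R A b B = 1) :
    ∃ (a : Fin n → Fin 2) (b : Fin n),
      ∑ A, R A b (a b) * S a A ≤ 1 / 2 := by
  by_contra hcon
  push Not at hcon
  let i : Fin n := ⟨0, by omega⟩
  let j : Fin n := ⟨1, by omega⟩
  have hij : j ≠ i := by simp [i, j]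
  have main : ∀ u v : Fin 2, ∃ t : ℝ, 1 / 2 < R 0 i u * t + R 1 i u * (1 - t) ∧
      1 / 2 < R 0 j v * t + R 1 j v * (1 - t) := by
    intro u v
    let a : Fin n → Fin 2 := fun b => if b = i then u else v
    have hai : a i = u := by simp [a]
    have haj : a j = v := by simp [a, hij]
    have h1 := hcon a i
    have h2 := hcon a j
    have h3 := hS1 a
    rw [Fin.sum_univ_two] at h1 h2 h3
    rw [hai] at h1
    rw [haj] at h2
    have h4 : S a 1 = 1 - S a 0 := by linarith
    rw [h4] at h1 h2
    exact ⟨S a 0, h1, h2⟩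
  have hR' : ∀ A b, R A b 1 = 1 - R A b 0 := by
    intro A b
    have := hR1 A b
    rw [Fin.sum_univ_two] at this
    linarith
  apply line_misses_quadrant (R 0 i 0 - 1 / 2) (R 1 i 0 - 1 / 2) (R 0 j 0 - 1 / 2) (R 1 j 0 - 1 / 2)
  rintro e f (rfl | rfl) (rfl | rfl)
  · obtain ⟨t, h1, h2⟩ := main 0 0
    exact ⟨t, by linarith, by linarith⟩
  · obtain ⟨t, h1, h2⟩ := main 0 1
    simp only [hR'] at h1 h2
    exact ⟨t, by linarith, by linarith⟩
  · obtain ⟨t, h1, h2⟩ := main 1 0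
    simp only [hR'] at h1 h2
    exact ⟨t, by linarith, by linarith⟩
  · obtain ⟨t, h1, h2⟩ := main 1 1
    simp only [hR'] at h1 h2
    exact ⟨t, by linarith, by linarith⟩
end

section
/- (Corollary 4.) Let n ≥ 2 and consider the n → 1 random access code with binary message set M = {0,1}. For every detection-loophole strategy — a probability distribution p over a finite strategy set I, probability distributions P(·|a) on {0,1} for a ∈ {0,1}ⁿ, probability distributions P_i(·|A,b) on {0,1}, and efficiencies η_i(A,b) ∈ [0,1] with D(a,b) := Σ_{i,A} p_i η_i(A,b) P(A|a) > 0 for all a ∈ {0,1}ⁿ, b ∈ Fin n — there exist a ∈ {0,1}ⁿ and b ∈ Fin n such that P_DL(a_b|a,b) := (Σ_{i,A} p_i η_i(A,b) P_i(a_b|A,b) P(A|a)) / D(a,b) ≤ 1/2. That is, the detection loophole cannot raise the worst-case success probability of an n → 1 random access code above 1/2. -/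
/-- Corollary 4: for `n ≥ 2`, the detection loophole cannot raise
the worst-case success probability of an `n → 1` random access code (binary
message set `Fin 2`) above `1/2`: for every detection-loophole strategy —
distribution `p` on Bob's strategies `I`, encodings `P(·|a)` on `Fin 2`,
decodings `Pᵢ(·|A,b)` on `Fin 2` and efficiencies `ηᵢ(A,b) ∈ [0,1]` with
positive click probability — there exist `a : Fin n → Fin 2` and `b : Fin n`
with `P_DL(a b|a,b) ≤ 1/2`. -/
theorem corollary4
    (n : ℕ) (hn : 2 ≤ n)
    {I : Type*} [Fintype I] [Nonempty I]
    (p : I → ℝ) (hp : ∀ i, 0 ≤ p i) (hp1 : ∑ i, p i = 1)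
    (P : (Fin n → Fin 2) → Fin 2 → ℝ)
    (hP : ∀ a A, 0 ≤ P a A) (hP1 : ∀ a, ∑ A, P a A = 1)
    (Pi : I → Fin 2 → Fin n → Fin 2 → ℝ)
    (hPi : ∀ i A b B, 0 ≤ Pi i A b B) (hPi1 : ∀ i A b, ∑ B, Pi i A b B = 1)
    (η : I → Fin 2 → Fin n → ℝ) (hη : ∀ i A b, 0 ≤ η i A b ∧ η i A b ≤ 1)
    (hD : ∀ (a : Fin n → Fin 2) (b : Fin n),
      0 < ∑ i, ∑ A, p i * η i A b * P a A) :
    ∃ (a : Fin n → Fin 2) (b : Fin n),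
      (∑ i, ∑ A, p i * η i A b * Pi i A b (a b) * P a A) /
        (∑ i, ∑ A, p i * η i A b * P a A) ≤ 1 / 2 := by
  by_contra hcon
  push Not at hcon
  obtain ⟨S, hS⟩ : ∃ S : Fin n → Fin 2 → Fin 2 → ℝ,
      S = fun b A B => ∑ i, p i * η i A b * Pi i A b B := ⟨_, rfl⟩
  have hnum : ∀ (a : Fin n → Fin 2) (b : Fin n) (B : Fin 2),
      ∑ i, ∑ A, p i * η i A b * Pi i A b B * P a A = S b 0 B * P a 0 + S b 1 B * P a 1 := by
    intro a b B
    rw [Finset.sum_comm, Fin.sum_univ_two, hS]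
    simp only [Finset.sum_mul]
  have hden : ∀ (a : Fin n → Fin 2) (b : Fin n),
      ∑ i, ∑ A, p i * η i A b * P a A
        = (S b 0 0 + S b 0 1) * P a 0 + (S b 1 0 + S b 1 1) * P a 1 := by
    intro a b
    have h : ∀ a b, ∑ i, ∑ A, p i * η i A b * P a A
        = ∑ i, ∑ A, p i * η i A b * Pi i A b 0 * P a A
          + ∑ i, ∑ A, p i * η i A b * Pi i A b 1 * P a A := by
      intro a b
      rw [← Finset.sum_add_distrib]
      refine Finset.sum_congr rfl fun i _ => ?_
      rw [← Finset.sum_add_distrib]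
      refine Finset.sum_congr rfl fun A _ => ?_
      have := hPi1 i A b
      rw [Fin.sum_univ_two] at this
      linear_combination (-(p i * η i A b * P a A)) * this
    rw [h, hnum, hnum]
    ring
  have key : ∀ (a : Fin n → Fin 2) (b : Fin n),
      (S b 0 0 + S b 0 1) * P a 0 + (S b 1 0 + S b 1 1) * P a 1
        < 2 * (S b 0 (a b) * P a 0 + S b 1 (a b) * P a 1) := by
    intro a b
    have h1 := hcon a b
    have h2 := hD a b
    rw [lt_div_iff₀ h2, hnum, hden] at h1
    linarith
  obtain ⟨e, he⟩ : ∃ e : Fin n → Fin 2 → ℝ, e = fun b A => S b A 0 - S b A 1 := ⟨_, rfl⟩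
  have hpos : ∀ (a : Fin n → Fin 2) (b : Fin n), a b = 0 →
      0 < e b 1 + (e b 0 - e b 1) * P a 0 := by
    intro a b hab
    have h := key a b
    have h1 := hP1 a
    rw [Fin.sum_univ_two] at h1
    have h2 : P a 1 = 1 - P a 0 := by linarith
    rw [hab, h2] at h
    simp only [he]
    linarith
  have hneg : ∀ (a : Fin n → Fin 2) (b : Fin n), a b = 1 →
      e b 1 + (e b 0 - e b 1) * P a 0 < 0 := by
    intro a b hab
    have h := key a b
    have h1 := hP1 a
    rw [Fin.sum_univ_two] at h1
    have h2 : P a 1 = 1 - P a 0 := by linarith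
    rw [hab, h2] at h
    simp only [he]
    linarith
  obtain ⟨x, y, hxy⟩ : ∃ x y : Fin n, y ≠ x :=
    ⟨⟨0, by omega⟩, ⟨1, by omega⟩, by simp [Fin.ext_iff]⟩
  obtain ⟨w, hw⟩ : ∃ w : Fin 2 → Fin 2 → Fin n → Fin 2,
      w = fun s t k => if k = x then s else t := ⟨_, rfl⟩
  have wx : ∀ s t, w s t x = s := by intro s t; simp [hw]
  have wy : ∀ s t, w s t y = t := by intro s t; simp [hw, hxy]
  have a1 := hpos (w 0 0) x (wx _ _)
  have a2 := hpos (w 0 1) x (wx _ _)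
  have a3 := hneg (w 1 0) x (wx _ _)
  have a4 := hneg (w 1 1) x (wx _ _)
  have b1 := hpos (w 0 0) y (wy _ _)
  have b2 := hneg (w 0 1) y (wy _ _)
  have b3 := hpos (w 1 0) y (wy _ _)
  have b4 := hneg (w 1 1) y (wy _ _)
  generalize e x 0 - e x 1 = d at *
  generalize e y 0 - e y 1 = f at *
  generalize P (w 0 0) 0 = q1 at *
  generalize P (w 0 1) 0 = q2 at *
  generalize P (w 1 0) 0 = q3 at *
  generalize P (w 1 1) 0 = q4 at *
  have c1 : 0 < d * (q1 - q4) := by linarith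
  have c2 : 0 < d * (q2 - q3) := by linarith
  have c3 : 0 < f * (q1 - q4) := by linarith
  have c4 : 0 < f * (q3 - q2) := by linarith
  have g1 := mul_pos c1 c3
  have g2 := mul_pos c2 c4
  have k1 : 0 < d * f := by
    by_contra h
    nlinarith [sq_nonneg (q1 - q4), mul_nonneg (sub_nonneg.2 (not_lt.1 h)) (sq_nonneg (q1 - q4))]
  nlinarith [mul_nonneg k1.le (sq_nonneg (q2 - q3))]
end

section
/- (Nayak-type bound for classical random access codes, classical case of the bound used for the 3 → log 6 example.) Let n ≥ 1, let M be a finite message set of cardinality D ≥ 2, and let 1/2 ≤ p ≤ 1. Suppose a classical strategy for the n-bit random access code — probability distributions S(·|a) on M for a ∈ {0,1}ⁿ and R(·|A,b) on {0,1} for A ∈ M, b ∈ Fin n — satisfies Σ_{A∈M} R(a_b|A,b) S(A|a) ≥ p for every a ∈ {0,1}ⁿ and b ∈ Fin n. Then n · (1 − h(p)) ≤ log₂ D, where h(p) = −p log₂ p − (1−p) log₂(1−p) is the binary Shannon entropy (with h(1) = 0). -/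
/-- The binary Shannon entropy `h(p) = -p log₂ p - (1-p) log₂ (1-p)`
(with the conventions `h 0 = h 1 = 0`, automatic since `Real.logb 2 0 = 0`). -/
noncomputable def binaryEntropy (p : ℝ) : ℝ :=
  -p * Real.logb 2 p - (1 - p) * Real.logb 2 (1 - p)

theorem nayak_core
    (n : ℕ) {M : Type*} [Fintype M]
    (p : ℝ) (hp : 1 / 2 ≤ p) (hp1 : p < 1)
    (S : (Fin n → Fin 2) → M → ℝ)
    (hS : ∀ a A, 0 ≤ S a A) (hS1 : ∀ a, ∑ A, S a A = 1)
    (R : M → Fin n → Fin 2 → ℝ)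
    (hR : ∀ A b B, 0 ≤ R A b B) (hR1 : ∀ A b, ∑ B, R A b B = 1)
    (hsucc : ∀ (a : Fin n → Fin 2) (b : Fin n),
      p ≤ ∑ A, R A b (a b) * S a A) :
    (2 : ℝ) ^ n * Real.exp (-(n * Real.binEntropy p)) ≤ Fintype.card M := by
  have hp0 : 0 < p := by linarith
  have hq0 : 0 < 1 - p := by linarith
  set w : M → Fin n → Fin 2 → ℝ := fun A b B =>
    R A b B * Real.log p + (1 - R A b B) * Real.log (1 - p) with hw
  have hR1' : ∀ A b, R A b 0 + R A b 1 = 1 := fun A b => by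
    simpa [Fin.sum_univ_two] using hR1 A b
  have hRle : ∀ A b B, R A b B ≤ 1 := fun A b B => by
    rw [← hR1 A b]
    exact Finset.single_le_sum (fun i _ => hR A b i) (Finset.mem_univ B)
  have hwle : ∀ A b B, Real.exp (w A b B) ≤ R A b B * p + (1 - R A b B) * (1 - p) := by
    intro A b B
    have := convexOn_exp.2 (Set.mem_univ (Real.log p)) (Set.mem_univ (Real.log (1 - p)))
      (hR A b B) (sub_nonneg.2 (hRle A b B)) (by ring)
    simpa [Real.exp_log hp0, Real.exp_log hq0, hw] using this
  have hsum : ∀ A, ∑ a : Fin n → Fin 2, Real.exp (∑ b, w A b (a b)) ≤ 1 := by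
    intro A
    simp_rw [Real.exp_sum]
    rw [← Fintype.prod_sum (fun b B => Real.exp (w A b B))]
    refine Finset.prod_le_one (fun b _ => Finset.sum_nonneg fun B _ => (Real.exp_pos _).le) ?_
    intro b _
    rw [Fin.sum_univ_two]
    have h0 := hwle A b 0
    have h1 := hwle A b 1
    have h2 : R A b 1 = 1 - R A b 0 := by linarith [hR1' A b]
    rw [h2] at h1
    nlinarith
  have hlog : Real.log (1 - p) ≤ Real.log p := Real.log_le_log hq0 (by linarith)
  have ha : ∀ a : Fin n → Fin 2, Real.exp (-(n * Real.binEntropy p)) ≤ ∑ A, Real.exp (∑ b, w A b (a b)) := by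
    intro a
    have h1 : -(n * Real.binEntropy p) ≤ ∑ A, S a A * ∑ b, w A b (a b) := by
      have : ∑ A, S a A * ∑ b, w A b (a b) = ∑ b, ((∑ A, R A b (a b) * S a A)
          * (Real.log p - Real.log (1 - p)) + Real.log (1 - p)) := by
        simp_rw [Finset.mul_sum]
        rw [Finset.sum_comm]
        refine Finset.sum_congr rfl fun b _ => ?_
        rw [Finset.sum_mul]
        have h4 : Real.log (1 - p) = ∑ A, S a A * Real.log (1 - p) := by
          rw [← Finset.sum_mul, hS1 a, one_mul]
        conv_rhs => arg 2; rw [h4]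
        rw [← Finset.sum_add_distrib]
        refine Finset.sum_congr rfl fun A _ => ?_
        simp only [hw]
        ring
      rw [this]
      have h3 : -(n * Real.binEntropy p) = ∑ b : Fin n,
          (p * (Real.log p - Real.log (1 - p)) + Real.log (1 - p)) := by
        simp [Real.binEntropy, Real.log_inv]
        ring
      rw [h3]
      refine Finset.sum_le_sum fun b _ => ?_
      have := mul_le_mul_of_nonneg_right (hsucc a b) (sub_nonneg.2 hlog)
      linarith
    have h2 := convexOn_exp.map_sum_le (t := Finset.univ) (w := S a)
      (p := fun A => ∑ b, w A b (a b)) (fun A _ => hS a A) (hS1 a) (fun A _ => Set.mem_univ _)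
    simp only [smul_eq_mul] at h2
    refine (Real.exp_le_exp.2 h1).trans (h2.trans (Finset.sum_le_sum fun A _ => ?_))
    have : S a A ≤ 1 := by
      rw [← hS1 a]
      exact Finset.single_le_sum (fun i _ => hS a i) (Finset.mem_univ A)
    exact mul_le_of_le_one_left (Real.exp_pos _).le this
  calc (2 : ℝ) ^ n * Real.exp (-(n * Real.binEntropy p))
      = ∑ a : Fin n → Fin 2, Real.exp (-(n * Real.binEntropy p)) := by simp
    _ ≤ ∑ a : Fin n → Fin 2, ∑ A, Real.exp (∑ b, w A b (a b)) :=
        Finset.sum_le_sum fun a _ => ha a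
    _ = ∑ A, ∑ a : Fin n → Fin 2, Real.exp (∑ b, w A b (a b)) := Finset.sum_comm
    _ ≤ ∑ A : M, (1 : ℝ) := Finset.sum_le_sum fun A _ => hsum A
    _ = Fintype.card M := by simp

/-- Nayak-type bound for classical random access codes: if a
classical strategy for the `n`-bit random access code with message set `M` of
cardinality `D ≥ 2` succeeds with probability at least `p` (`1/2 ≤ p ≤ 1`) on
every input pair `(a, b)`, then `n * (1 - h(p)) ≤ log₂ D`. -/
theorem nayak_bound
    (n : ℕ) (hn : 1 ≤ n)
    {M : Type*} [Fintype M] (D : ℕ) (hD : Fintype.card M = D) (hD2 : 2 ≤ D)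
    (p : ℝ) (hp : 1 / 2 ≤ p) (hp1 : p ≤ 1)
    (S : (Fin n → Fin 2) → M → ℝ)
    (hS : ∀ a A, 0 ≤ S a A) (hS1 : ∀ a, ∑ A, S a A = 1)
    (R : M → Fin n → Fin 2 → ℝ)
    (hR : ∀ A b B, 0 ≤ R A b B) (hR1 : ∀ A b, ∑ B, R A b B = 1)
    (hsucc : ∀ (a : Fin n → Fin 2) (b : Fin n),
      p ≤ ∑ A, R A b (a b) * S a A) :
    (n : ℝ) * (1 - binaryEntropy p) ≤ Real.logb 2 D := by
  have key : (2 : ℝ) ^ n * Real.exp (-(n * Real.binEntropy p)) ≤ Fintype.card M := by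
    rcases lt_or_eq_of_le hp1 with h | h
    · exact nayak_core n p hp h S hS hS1 R hR hR1 hsucc
    · subst h
      have hc : Continuous fun q : ℝ => (2 : ℝ) ^ n * Real.exp (-(n * Real.binEntropy q)) := by
        fun_prop
      have ht := (hc.tendsto 1).mono_left (nhdsWithin_le_nhds (s := Set.Iio 1))
      refine le_of_tendsto ht ?_
      filter_upwards [Ioo_mem_nhdsLT (show (1 / 2 : ℝ) < 1 by norm_num)] with q hq
      exact nayak_core n q hq.1.le hq.2 S hS hS1 R hR hR1
        (fun a b => hq.2.le.trans (hsucc a b))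
  rw [hD] at key
  have hl2 : 0 < Real.log 2 := Real.log_pos (by norm_num)
  have hlog := Real.log_le_log (by positivity) key
  rw [Real.log_mul (by positivity) (Real.exp_pos _).ne', Real.log_exp, Real.log_pow] at hlog
  have hb : binaryEntropy p = Real.binEntropy p / Real.log 2 := by
    simp only [binaryEntropy, Real.binEntropy, Real.logb, Real.log_inv]
    ring
  rw [hb, Real.logb, le_div_iff₀ hl2]
  have : (n : ℝ) * (1 - Real.binEntropy p / Real.log 2) * Real.log 2
      = n * Real.log 2 + -(n * Real.binEntropy p) := by
    field_simp
    ring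
  rw [this]
  exact hlog
end

section
/- (Worst-case bound for the classical 3 → log 6 random access code.) For every classical strategy for the 3-bit random access code with a message set M of cardinality 6 — probability distributions S(·|a) on M for each a ∈ {0,1}³ and probability distributions R(·|A,b) on {0,1} for each A ∈ M, b ∈ Fin 3 — there exist a ∈ {0,1}³ and b ∈ Fin 3 such that Σ_{A∈M} R(a_b|A,b) S(A|a) < 0.981. That is, the worst-case success probability P^{wc} of the classical 3 → log 6 random access code satisfies P^{wc} < 0.981. -/
/-- worst-case bound for the classical 3 → log 6 random access
code: every classical strategy for the 3-bit random access code with a message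
set of cardinality 6 has worst-case success probability strictly below 0.981:
there exist `a : Fin 3 → Fin 2` and `b : Fin 3` with
`∑ A, R(a b|A,b) * S(A|a) < 0.981`. -/
theorem rac_3_log6_bound
    {M : Type*} [Fintype M] (hM : Fintype.card M = 6)
    (S : (Fin 3 → Fin 2) → M → ℝ)
    (hS : ∀ a A, 0 ≤ S a A) (hS1 : ∀ a, ∑ A, S a A = 1)
    (R : M → Fin 3 → Fin 2 → ℝ)
    (hR : ∀ A b B, 0 ≤ R A b B) (hR1 : ∀ A b, ∑ B, R A b B = 1) :
    ∃ (a : Fin 3 → Fin 2) (b : Fin 3),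
      ∑ A, R A b (a b) * S a A < 0.981 := by
  by_contra hcon
  push Not at hcon
  have hle : ∀ A b B, R A b B ≤ 1 := by
    intro A b B
    rw [← hR1 A b]
    exact Finset.single_le_sum (fun i _ => hR A b i) (Finset.mem_univ B)
  -- every input has a message that decodes well on all three indices
  have key : ∀ a : Fin 3 → Fin 2, ∃ A, (2.943 : ℝ) ≤ ∑ b, R A b (a b) := by
    intro a
    by_contra h
    push Not at h
    have h1 : ∑ A, (∑ b, R A b (a b)) * S a A < ∑ A, 2.943 * S a A := by
      apply Finset.sum_lt_sum
      · intro A _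
        exact mul_le_mul_of_nonneg_right (h A).le (hS a A)
      · by_contra hz
        push Not at hz
        have h0 : ∀ A, S a A = 0 := by
          intro A
          have := hz A (Finset.mem_univ A)
          nlinarith [h A, hS a A]
        have := hS1 a
        simp [h0] at this
    rw [← Finset.mul_sum, hS1] at h1
    simp only [Fin.sum_univ_three, add_mul, Finset.sum_add_distrib] at h1
    have := hcon a 0
    have := hcon a 1
    have := hcon a 2
    norm_num at *
    linarith
  choose f hf using key
  have good : ∀ a b, (0.943 : ℝ) ≤ R (f a) b (a b) := by
    intro a b
    have h := hf a
    rw [Fin.sum_univ_three] at h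
    have h0 := hle (f a) 0 (a 0)
    have h1 := hle (f a) 1 (a 1)
    have h2 := hle (f a) 2 (a 2)
    norm_num at h ⊢
    fin_cases b <;> simp only [Fin.zero_eta, Fin.mk_one, Fin.reduceFinMk] <;> linarith
  have hinj : Function.Injective f := by
    intro a a' haa
    funext b
    by_contra hne
    have h1 := good a b
    have h2 := good a' b
    rw [← haa] at h2
    have h3 : R (f a) b (a b) + R (f a) b (a' b) ≤ 1 := by
      rw [← hR1 (f a) b, ← Finset.sum_pair hne]
      exact Finset.sum_le_sum_of_subset_of_nonneg (Finset.subset_univ _)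
        (fun i _ _ => hR (f a) b i)
    norm_num at h1 h2
    linarith
  have hcard := Fintype.card_le_of_injective f hinj
  rw [hM] at hcard
  simp at hcard
end

section
/- (Detection-loophole attack achieving perfect worst-case success for the 3 → log 6 random access code.) Consider the message set M = {0,1} × Fin 3 (a bit A₀ and a trit A₁, so |M| = 6) and define: Alice's encoding S((A₀,A₁)|a) := 1/3 if A₀ = a_{A₁} and 0 otherwise, for a ∈ {0,1}³; Bob's detection efficiency η((A₀,A₁), b) := 1 if b = A₁ and 0 otherwise; and Bob's decoding Q(B|(A₀,A₁), b) := 1 if B = A₀ and 0 otherwise. Then: (i) S(·|a) is a probability distribution on M for every a, and Q(·|(A₀,A₁),b) is a probability distribution on {0,1}; (ii) the click probability D(a,b) := Σ_{A∈M} η(A,b) S(A|a) equals 1/3 > 0 for every a ∈ {0,1}³, b ∈ Fin 3; and (iii) the post-selected statistics achieve perfect success: P_DL(a_b|a,b) := (Σ_{A∈M} η(A,b) Q(a_b|A,b) S(A|a)) / D(a,b) = 1 for every a ∈ {0,1}³ and b ∈ Fin 3. Hence there exists a detection-loophole strategy for the 3 → log 6 random access code with worst-case success probability P_DL^{wc}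 = 1. -/
/-- detection-loophole attack with perfect worst-case success for
the 3 → log 6 random access code: with message set `M = Fin 2 × Fin 3` (a bit
`A₀` and a trit `A₁`), Alice's encoding `S((A₀,A₁)|a) = 1/3` if `A₀ = a A₁` and
`0` otherwise, Bob's efficiency `η((A₀,A₁),b) = 1` if `b = A₁` and `0`
otherwise, and Bob's decoding `Q(B|(A₀,A₁),b) = 1` if `B = A₀` and `0`
otherwise, one gets: (i) `S` and `Q` are probability distributions, (ii) the
click probability `D(a,b) = ∑ A, η A b * S a A` equals `1/3 > 0`, and (iii) the
post-selected statistics are perfect: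
`(∑ A, η A b * Q A b (a b) * S a A) / D a b = 1` for all `a, b`. -/
theorem dl_attack_3_log6
    (S : (Fin 3 → Fin 2) → Fin 2 × Fin 3 → ℝ)
    (hS : ∀ a A₀ A₁, S a (A₀, A₁) = if A₀ = a A₁ then 1 / 3 else 0)
    (η : Fin 2 × Fin 3 → Fin 3 → ℝ)
    (hη : ∀ A₀ A₁ b, η (A₀, A₁) b = if b = A₁ then 1 else 0)
    (Q : Fin 2 × Fin 3 → Fin 3 → Fin 2 → ℝ)
    (hQ : ∀ A₀ A₁ b B, Q (A₀, A₁) b B = if B = A₀ then 1 else 0) :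
    -- (i) S(·|a) and Q(·|(A₀,A₁),b) are probability distributions
    (∀ a, (∀ A, 0 ≤ S a A) ∧ ∑ A, S a A = 1) ∧
    (∀ A b, (∀ B, 0 ≤ Q A b B) ∧ ∑ B, Q A b B = 1) ∧
    -- (ii) the click probability equals 1/3 > 0
    (∀ (a : Fin 3 → Fin 2) (b : Fin 3),
      ∑ A, η A b * S a A = 1 / 3 ∧ (0 : ℝ) < 1 / 3) ∧
    -- (iii) the post-selected statistics achieve perfect worst-case success
    (∀ (a : Fin 3 → Fin 2) (b : Fin 3),
      (∑ A, η A b * Q A b (a b) * S a A) / (∑ A, η A b * S a A) = 1) := by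
  have hD : ∀ (a : Fin 3 → Fin 2) (b : Fin 3), ∑ A, η A b * S a A = 1 / 3 := by
    intro a b
    simp [Fintype.sum_prod_type_right, hS, hη, ← Finset.mul_sum]
  have hN : ∀ (a : Fin 3 → Fin 2) (b : Fin 3),
      ∑ A, η A b * Q A b (a b) * S a A = 1 / 3 := by
    intro a b
    rw [← hD a b]
    refine Finset.sum_congr rfl ?_
    rintro ⟨A₀, A₁⟩ -
    rw [hη, hQ, hS]
    by_cases h1 : b = A₁
    · subst h1
      by_cases h2 : A₀ = a b
      · simp [h2]
      · simp [h2]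
    · simp [h1]
  refine ⟨fun a => ⟨?_, ?_⟩, ?_, fun a b => ⟨hD a b, by norm_num⟩, fun a b => ?_⟩
  · rintro ⟨A₀, A₁⟩
    rw [hS]
    split_ifs <;> norm_num
  · simp [Fintype.sum_prod_type_right, hS]
  · rintro ⟨A₀, A₁⟩ b
    refine ⟨fun B => ?_, ?_⟩
    · rw [hQ]
      split_ifs <;> norm_num
    · simp [hQ]
  · rw [hN, hD]
    norm_num
end
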